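/- For every positive integer k, ∑_{n=1}^{k} cos(π n² / k) equals √(2k)/2 if k is even, and equals -1 if k is odd. -/

import Mathlib

open Finset Real

/-!
Write `S(a, k) = ∑_{0 ≤ r < k} exp(π i a r² / k)`. The sum in question is the real part of
`S(1, k)`, up to its two end terms.

For `a * k` odd, the reflection `r ↦ k - r` changes the sign of the summand, so only `r = 0`
survives and `S(a, k) = 1`.

For `a * k` even, `S(a, k)` governs the growth of Jacobi's `θ` at the cusp `a / k`: splitting the
theta series by residues mod `k` and applying the functional equation to each piece gives
`θ(a/k - 1/(k²σ)) / (-iσ)^(1/2) → S(a, k)` as `Im σ → ∞`. The transformation `τ ↦ -1/τ` takes the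
cusp `a / k` to `-k / a`, and comparing the two limits yields the Landsberg–Schaar reciprocity
`S(a, k) = exp(π i / 4) √(k / a) S(-k, a)`. For `a = 1` the right-hand sum is the single term `1`.
-/

section

open Filter Topology
open Complex (I)

lemma tsum_int_eq_sum_range_tsum {R : Type*} [AddCommGroup R] [UniformSpace R]
    [IsUniformAddGroup R] [CompleteSpace R] [T0Space R] {f : ℤ → R} (hf : Summable f)
    (k : ℕ) [NeZero k] :
    ∑' n, f n = ∑ r ∈ range k, ∑' m : ℤ, f (m * k + r) := by
  let e : Fin k × ℤ ≃ ℤ := (Equiv.prodComm (Fin k) ℤ).trans (Int.divModEquiv k).symm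
  have hfe : Summable fun p ↦ f (e p) := hf.comp_injective e.injective
  rw [← e.tsum_eq f, hfe.tsum_prod, tsum_fintype, Finset.sum_range]
  rfl

lemma neg_one_div_div_sub_one_div {K : Type*} [Field K] {a k s : K} (ha : a ≠ 0) (hk : k ≠ 0)
    (hs : s ≠ 0) (h : a * k * s ≠ 1) :
    -1 / (a / k - 1 / (k ^ 2 * s)) = -k / a - 1 / (a ^ 2 * (s + -1 / (a * k))) := by
  have hne : a * k * s - 1 ≠ 0 := sub_ne_zero.mpr h
  have hleft : a / k - 1 / (k ^ 2 * s) = (a * k * s - 1) / (k ^ 2 * s) := by field_simp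
  have hright : s + -1 / (a * k) = (a * k * s - 1) / (a * k) := by field_simp; ring
  rw [hleft, hright]
  field_simp
  ring

lemma ofReal_mul_cpow {r : ℝ} (hr : 0 ≤ r) (z s : ℂ) : (r * z) ^ s = (r : ℂ) ^ s * z ^ s := by
  rcases eq_or_ne s 0 with rfl | hs
  · simp
  rcases hr.eq_or_lt with rfl | hr
  · simp [hs]
  rcases eq_or_ne z 0 with rfl | hz
  · simp [hs]
  have hr0 : (r : ℂ) ≠ 0 := by exact_mod_cast hr.ne'
  rw [Complex.cpow_def_of_ne_zero (mul_ne_zero hr0 hz), Complex.cpow_def_of_ne_zero hr0,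
    Complex.cpow_def_of_ne_zero hz, Complex.log_ofReal_mul hr hz, Complex.ofReal_log hr.le,
    add_mul, Complex.exp_add]

lemma one_div_neg_I_mul_ofReal_cpow_half {x : ℝ} (hx : 0 ≤ x) :
    1 / (-I * x) ^ (1 / 2 : ℂ) = Complex.exp (π * I / 4) * √(x⁻¹) := by
  have hsqrt : (x : ℂ) ^ (1 / 2 : ℂ) = √x := by
    rw [Real.sqrt_eq_rpow, Complex.ofReal_cpow hx]
    norm_num
  have hI : (-I) ^ (1 / 2 : ℂ) = Complex.exp (-(π * I / 4)) := by
    rw [Complex.cpow_def_of_ne_zero (neg_ne_zero.mpr Complex.I_ne_zero), Complex.log_neg_I]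
    ring_nf
  rw [mul_comm (-I), ofReal_mul_cpow hx, hsqrt, hI, Complex.exp_neg, Real.sqrt_inv,
    Complex.ofReal_inv, one_div, mul_inv, inv_inv, mul_comm]

lemma tendsto_ofReal_inv_atTop : Tendsto (fun t : ℝ ↦ (t : ℂ)⁻¹) atTop (𝓝 0) :=
  tendsto_inv₀_cobounded.comp (RCLike.tendsto_ofReal_atTop_cobounded ℂ)

lemma tendsto_ofReal_add_cpow_div_cpow_atTop (c s : ℂ) :
    Tendsto (fun t : ℝ ↦ (t + c) ^ s / (t : ℂ) ^ s) atTop (𝓝 1) := by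
  have hone : Tendsto (fun t : ℝ ↦ 1 + c * (t : ℂ)⁻¹) atTop (𝓝 1) := by
    simpa using (tendsto_ofReal_inv_atTop.const_mul c).const_add 1
  have hcpow : Tendsto (fun t : ℝ ↦ (1 + c * (t : ℂ)⁻¹) ^ s) atTop (𝓝 1) := by
    simpa using hone.cpow tendsto_const_nhds Complex.one_mem_slitPlane
  refine hcpow.congr' ?_
  filter_upwards [eventually_gt_atTop 0] with t ht
  have ht0 : (t : ℂ) ≠ 0 := by exact_mod_cast ht.ne'
  have hadd : t + c = t * (1 + c * (t : ℂ)⁻¹) := by field_simp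
  rw [hadd, ofReal_mul_cpow ht.le, mul_div_cancel_left₀]
  simp [Complex.cpow_eq_zero_iff, ht0]

lemma tendsto_one_div_neg_I_mul_sub_cpow_half {x : ℝ} (hx : 0 < x) (c : ℂ) :
    Tendsto (fun t : ℝ ↦ 1 / (-I * (x - 1 / (c * (t * I)))) ^ (1 / 2 : ℂ)) atTop
      (𝓝 (Complex.exp (π * I / 4) * √(x⁻¹))) := by
  have harg : Tendsto (fun t : ℝ ↦ -I * (x - 1 / (c * (t * I)))) atTop (𝓝 (-I * x)) := by
    have := ((tendsto_ofReal_inv_atTop.const_mul (c⁻¹ * I⁻¹)).const_sub (x : ℂ)).const_mul (-I)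
    rw [mul_zero, sub_zero] at this
    refine this.congr fun t ↦ ?_
    rw [one_div, mul_inv, mul_inv, mul_right_comm, mul_assoc]
  have hmem : -I * x ∈ Complex.slitPlane := by simp [Complex.mem_slitPlane_iff, hx.ne']
  rw [← one_div_neg_I_mul_ofReal_cpow_half hx.le]
  refine tendsto_const_nhds.div (harg.cpow tendsto_const_nhds hmem) ?_
  simp [Complex.cpow_eq_zero_iff, hx.ne']

lemma tendsto_ofReal_mul_I_add_comap_im_atTop (c : ℂ) :
    Tendsto (fun t : ℝ ↦ t * I + c) atTop (comap Complex.im atTop) := by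
  refine tendsto_comap_iff.mpr ((tendsto_atTop_add_const_right _ c.im tendsto_id).congr fun t ↦ ?_)
  simp

lemma tendsto_jacobiTheta₂_comap_im_atTop (z : ℂ) :
    Tendsto (jacobiTheta₂ z) (comap Complex.im atTop) (𝓝 1) := by
  have hterm (n : ℤ) : Tendsto (jacobiTheta₂_term n z) (comap Complex.im atTop)
      (𝓝 (if n = 0 then 1 else 0)) := by
    split_ifs with hn
    · have hone : jacobiTheta₂_term 0 z = fun _ ↦ 1 := by ext; simp [jacobiTheta₂_term]
      exact hn ▸ hone ▸ tendsto_const_nhds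
    · rw [tendsto_zero_iff_norm_tendsto_zero]
      simp only [norm_jacobiTheta₂_term]
      refine Real.tendsto_exp_atBot.comp (tendsto_atBot_add_const_right _ _ ?_)
      refine tendsto_comap.const_mul_atTop_of_neg ?_
      have : 0 < (n : ℝ) ^ 2 := by positivity
      nlinarith [Real.pi_pos]
  have hsum : Summable fun n : ℤ ↦ rexp (-π * (1 * n ^ 2 - 2 * |z.im| * |n|)) := by
    simpa using summable_pow_mul_jacobiTheta₂_term_bound |z.im| one_pos 0
  have hbound : ∀ᶠ τ in comap Complex.im atTop, ∀ n : ℤ,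
      ‖jacobiTheta₂_term n z τ‖ ≤ rexp (-π * (1 * n ^ 2 - 2 * |z.im| * |n|)) := by
    filter_upwards [tendsto_comap.eventually_ge_atTop 1] with τ hτ n
    exact norm_jacobiTheta₂_term_le one_pos le_rfl hτ n
  simpa [jacobiTheta₂] using! tendsto_tsum_of_dominated_convergence hsum hterm hbound

lemma jacobiTheta_eq_one_div_mul_jacobiTheta_neg_one_div (τ : ℂ) :
    jacobiTheta τ = 1 / (-I * τ) ^ (1 / 2 : ℂ) * jacobiTheta (-1 / τ) := by
  simpa [jacobiTheta_eq_jacobiTheta₂] using jacobiTheta₂_functional_equation 0 τ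

/-- The quadratic Gauss sum `∑_{r mod k} exp(π i a r² / k)`. With `π` in place of `2π`, the summand
is `k`-periodic in `r` only when `a * k` is even, so the residues `0, …, k - 1` are singled out. -/
noncomputable def quadraticGaussSum (a : ℤ) (k : ℕ) : ℂ :=
  ∑ r ∈ range k, Complex.exp (π * I * a * r ^ 2 / k)

lemma exp_pi_mul_I_mul_add_sq_div (a m n : ℤ) (k : ℕ) [NeZero k] :
    Complex.exp (π * I * a * (m * k + n) ^ 2 / k) =
      (-1) ^ (a * k * m ^ 2) * Complex.exp (π * I * a * n ^ 2 / k) := by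
  have hk : (k : ℂ) ≠ 0 := NeZero.ne _
  have hexp : π * I * a * (m * k + n) ^ 2 / k =
      (a * k * m ^ 2 : ℤ) * (π * I) + π * I * a * n ^ 2 / k + (a * m * n : ℤ) * (2 * π * I) := by
    push_cast
    field_simp
    ring
  rw [hexp, Complex.exp_add, Complex.exp_int_mul_two_pi_mul_I, mul_one, Complex.exp_add,
    Complex.exp_int_mul, Complex.exp_pi_mul_I]

lemma re_quadraticGaussSum (a : ℤ) (k : ℕ) :
    (quadraticGaussSum a k).re = ∑ n ∈ range k, Real.cos (π * a * n ^ 2 / k) := by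
  rw [quadraticGaussSum, Complex.re_sum]
  refine Finset.sum_congr rfl fun n _ ↦ ?_
  rw [← Complex.exp_ofReal_mul_I_re]
  push_cast
  ring_nf

lemma sum_Icc_cos_pi_mul_sq_div (a : ℤ) (k : ℕ) [NeZero k] :
    ∑ n ∈ Icc 1 k, Real.cos (π * a * n ^ 2 / k) =
      (quadraticGaussSum a k).re + (-1) ^ (a * k) - 1 := by
  let f (n : ℕ) : ℝ := Real.cos (π * a * n ^ 2 / k)
  have hshift : ∑ n ∈ Icc 1 k, f n + f 0 = ∑ n ∈ range k, f n + f k := by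
    rw [← Finset.sum_range_succ, Finset.sum_range_eq_add_Ico f k.succ_pos, add_comm]
    rfl
  have hfirst : f 0 = 1 := by simp [f]
  have hlast : f k = (-1) ^ (a * k) := by
    have hk : (k : ℝ) ≠ 0 := NeZero.ne _
    rw [← Real.cos_int_mul_pi]
    simp only [f]
    congr 1
    push_cast
    field_simp
  rw [re_quadraticGaussSum]
  linear_combination hshift + hlast - hfirst

lemma quadraticGaussSum_of_odd {a : ℤ} {k : ℕ} (h : Odd (a * k)) : quadraticGaussSum a k = 1 := by
  have : NeZero k := ⟨by rintro rfl; simp at h⟩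
  let f (n : ℕ) : ℂ := Complex.exp (π * I * a * n ^ 2 / k)
  have hreflect {n : ℕ} (hn : n ≤ k) : f (k - n) = -f n := by
    have := exp_pi_mul_I_mul_add_sq_div a 1 (-n) k
    simp only [one_pow, mul_one, h.neg_one_zpow] at this
    simp only [f, Nat.cast_sub hn]
    simpa [← sub_eq_add_neg] using this
  have hsum : ∑ n ∈ range (k + 1), f n = -∑ n ∈ range (k + 1), f n := by
    rw [← Finset.sum_neg_distrib, ← Finset.sum_flip]
    exact Finset.sum_congr rfl fun n hn ↦ hreflect (Nat.lt_succ_iff.mp (mem_range.mp hn))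
  have hlast : f k = -1 := by simpa [f] using hreflect (Nat.zero_le k)
  rw [self_eq_neg, Finset.sum_range_succ, hlast] at hsum
  exact add_neg_eq_zero.mp hsum

lemma jacobiTheta_intCast_div_add {a : ℤ} {k : ℕ} [NeZero k] (h : Even (a * k)) {w : ℂ}
    (hw : 0 < w.im) :
    jacobiTheta (a / k + w) = ∑ r ∈ range k, Complex.exp (π * I * a * r ^ 2 / k) *
      (Complex.exp (π * I * r ^ 2 * w) * jacobiTheta₂ (k * r * w) (k ^ 2 * w)) := by
  have him : 0 < (a / k + w : ℂ).im := by
    have : (a / k : ℂ) = ((a / k : ℝ) : ℂ) := by push_cast; rfl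
    rwa [this, Complex.add_im, Complex.ofReal_im, zero_add]
  have hterm (m : ℤ) (r : ℕ) : jacobiTheta₂_term (m * k + r) 0 (a / k + w) =
      Complex.exp (π * I * a * r ^ 2 / k) *
        (Complex.exp (π * I * r ^ 2 * w) * jacobiTheta₂_term m (k * r * w) (k ^ 2 * w)) := by
    have hphase := exp_pi_mul_I_mul_add_sq_div a m r k
    rw [(h.mul_right _).neg_one_zpow, one_mul] at hphase
    simp only [Int.cast_natCast] at hphase
    rw [← hphase, jacobiTheta₂_term, jacobiTheta₂_term, ← Complex.exp_add, ← Complex.exp_add]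
    congr 1
    push_cast
    ring
  rw [jacobiTheta_eq_jacobiTheta₂, jacobiTheta₂,
    tsum_int_eq_sum_range_tsum ((summable_jacobiTheta₂_term_iff _ _).mpr him) k]
  simp only [hterm, tsum_mul_left, jacobiTheta₂]

lemma jacobiTheta_intCast_div_sub_one_div {a : ℤ} {k : ℕ} [NeZero k] (h : Even (a * k)) {σ : ℂ}
    (hσ : 0 < σ.im) :
    jacobiTheta (a / k - 1 / (k ^ 2 * σ)) = (-I * σ) ^ (1 / 2 : ℂ) *
      ∑ r ∈ range k, Complex.exp (π * I * a * r ^ 2 / k) * jacobiTheta₂ (r / k) σ := by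
  have hk : (k : ℂ) ≠ 0 := NeZero.ne _
  have hσ0 : σ ≠ 0 := by rintro rfl; simp at hσ
  have hroot : (-I * σ) ^ (1 / 2 : ℂ) ≠ 0 := by simp [Complex.cpow_eq_zero_iff, hσ0]
  have him : 0 < (-(1 / (k ^ 2 * σ)) : ℂ).im := by
    have : (-(1 / (k ^ 2 * σ)) : ℂ) = ((1 / k ^ 2 : ℝ) : ℂ) * (-σ⁻¹) := by
      push_cast
      field_simp
    rw [this, Complex.im_ofReal_mul, Complex.neg_im, Complex.inv_im]
    have hk' : (0 : ℝ) < k := by exact_mod_cast NeZero.pos k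
    have := Complex.normSq_pos.mpr hσ0
    rw [neg_div, neg_neg]
    positivity
  rw [sub_eq_add_neg, jacobiTheta_intCast_div_add h him, Finset.mul_sum]
  refine Finset.sum_congr rfl fun r _ ↦ ?_
  have hz : k * r * -(1 / (k ^ 2 * σ)) = -(r / k / σ) := by field_simp
  have hτ : k ^ 2 * -(1 / (k ^ 2 * σ)) = -1 / σ := by field_simp
  have he : π * I * r ^ 2 * -(1 / (k ^ 2 * σ)) = -π * I * (r / k) ^ 2 / σ := by field_simp
  rw [hz, hτ, he, jacobiTheta₂_neg_left, jacobiTheta₂_functional_equation (r / k) σ]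
  field_simp [hroot]

lemma tendsto_jacobiTheta_div_cpow_comap_im_atTop {a : ℤ} {k : ℕ} [NeZero k] (h : Even (a * k)) :
    Tendsto (fun σ : ℂ ↦ jacobiTheta (a / k - 1 / (k ^ 2 * σ)) / (-I * σ) ^ (1 / 2 : ℂ))
      (comap Complex.im atTop) (𝓝 (quadraticGaussSum a k)) := by
  have hlim : Tendsto
      (fun σ ↦ ∑ r ∈ range k, Complex.exp (π * I * a * r ^ 2 / k) * jacobiTheta₂ (r / k) σ)
      (comap Complex.im atTop) (𝓝 (quadraticGaussSum a k)) := by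
    refine tendsto_finsetSum _ fun r _ ↦ ?_
    simpa using (tendsto_jacobiTheta₂_comap_im_atTop (r / k)).const_mul
      (Complex.exp (π * I * a * r ^ 2 / k))
  refine hlim.congr' ?_
  filter_upwards [tendsto_comap.eventually_gt_atTop 0] with σ hσ
  have hσ0 : σ ≠ 0 := by rintro rfl; simp at hσ
  rw [jacobiTheta_intCast_div_sub_one_div h hσ, mul_div_cancel_left₀]
  simp [Complex.cpow_eq_zero_iff, hσ0]

lemma tendsto_jacobiTheta_div_cpow_atTop {a : ℤ} {k : ℕ} [NeZero k] (h : Even (a * k)) (c : ℂ) :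
    Tendsto (fun t : ℝ ↦ jacobiTheta (a / k - 1 / (k ^ 2 * (t * I + c))) / (t : ℂ) ^ (1 / 2 : ℂ))
      atTop (𝓝 (quadraticGaussSum a k)) := by
  have hratio : Tendsto (fun t : ℝ ↦ (-I * (t * I + c)) ^ (1 / 2 : ℂ) / (t : ℂ) ^ (1 / 2 : ℂ))
      atTop (𝓝 1) := by
    refine (tendsto_ofReal_add_cpow_div_cpow_atTop (-I * c) (1 / 2)).congr fun t ↦ ?_
    have : -I * (t * I + c) = t + -I * c := by linear_combination -t * Complex.I_sq
    rw [this]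
  have hprod := ((tendsto_jacobiTheta_div_cpow_comap_im_atTop h).comp
    (tendsto_ofReal_mul_I_add_comap_im_atTop c)).mul hratio
  rw [mul_one] at hprod
  refine hprod.congr' ?_
  filter_upwards [hratio.eventually_ne one_ne_zero] with t ht
  exact div_mul_div_cancel₀ (div_ne_zero_iff.mp ht).1

theorem quadraticGaussSum_reciprocity (a k : ℕ) [NeZero a] [NeZero k] (h : Even (a * k)) :
    quadraticGaussSum a k =
      Complex.exp (π * I / 4) * √(k / a) * quadraticGaussSum (-k) a := by
  have hak : Even ((a : ℤ) * k) := by exact_mod_cast h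
  have hka : Even (-(k : ℤ) * a) := by rwa [neg_mul, even_neg, mul_comm]
  let τ (t : ℝ) : ℂ := a / k - 1 / (k ^ 2 * (t * I))
  have hleft : Tendsto (fun t ↦ jacobiTheta (τ t) / (t : ℂ) ^ (1 / 2 : ℂ)) atTop
      (𝓝 (quadraticGaussSum a k)) := by
    simpa only [add_zero, Int.cast_natCast] using tendsto_jacobiTheta_div_cpow_atTop hak 0
  have hright : Tendsto (fun t ↦ jacobiTheta (-1 / τ t) / (t : ℂ) ^ (1 / 2 : ℂ)) atTop
      (𝓝 (quadraticGaussSum (-k) a)) := by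
    refine (tendsto_jacobiTheta_div_cpow_atTop hka (-1 / (a * k))).congr' ?_
    filter_upwards [eventually_ne_atTop 0] with t ht
    have hne : a * k * (t * I) ≠ 1 := fun h1 ↦ by simpa using congrArg Complex.re h1
    rw [neg_one_div_div_sub_one_div (NeZero.ne _) (NeZero.ne _) (by simpa using ht) hne,
      Int.cast_neg, Int.cast_natCast]
  have hfactor : Tendsto (fun t ↦ 1 / (-I * τ t) ^ (1 / 2 : ℂ)) atTop
      (𝓝 (Complex.exp (π * I / 4) * √(k / a))) := by
    have hpos : (0 : ℝ) < a / k :=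
      div_pos (Nat.cast_pos.mpr (NeZero.pos a)) (Nat.cast_pos.mpr (NeZero.pos k))
    simpa [τ] using! tendsto_one_div_neg_I_mul_sub_cpow_half hpos (k ^ 2)
  refine tendsto_nhds_unique hleft ((hfactor.mul hright).congr fun t ↦ ?_)
  rw [jacobiTheta_eq_one_div_mul_jacobiTheta_neg_one_div (τ t), mul_div_assoc]

lemma quadraticGaussSum_one_of_even {k : ℕ} [NeZero k] (hk : Even k) :
    quadraticGaussSum 1 k = Complex.exp (π * I / 4) * √k := by
  simpa [quadraticGaussSum] using quadraticGaussSum_reciprocity 1 k (by simpa using hk)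

lemma re_quadraticGaussSum_one_of_even {k : ℕ} [NeZero k] (hk : Even k) :
    (quadraticGaussSum 1 k).re = √(2 * k) / 2 := by
  have hexp : Complex.exp (π * I / 4) = Complex.exp ((π / 4 : ℝ) * I) := by
    push_cast
    ring_nf
  rw [quadraticGaussSum_one_of_even hk, Complex.re_mul_ofReal, hexp, Complex.exp_ofReal_mul_I_re,
    Real.cos_pi_div_four, Real.sqrt_mul zero_le_two]
  ring

end

theorem quadratic_cosine_sum (k : ℕ) (hk : 0 < k) :
    ∑ n ∈ Finset.Icc 1 k, Real.cos (π * (n : ℝ) ^ 2 / k) =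
      if Even k then Real.sqrt (2 * (k : ℝ)) / 2 else -1 := by
  have : NeZero k := ⟨hk.ne'⟩
  have hsum := sum_Icc_cos_pi_mul_sq_div 1 k
  simp only [Int.cast_one, mul_one, one_mul, zpow_natCast] at hsum
  rw [hsum]
  split_ifs with heven
  · rw [re_quadraticGaussSum_one_of_even heven, heven.neg_one_pow, add_sub_cancel_right]
  · have hodd : Odd k := Nat.not_even_iff_odd.mp heven
    rw [quadraticGaussSum_of_odd (by simpa using hodd), hodd.neg_one_pow]
    norm_num
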